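/- Let A > 0, k > 0, α > 1. There exist r > 0 and ω₀ > 0 such that for every ω > ω₀, every solution X = (x, v_x, y, v_y) : [0,∞) → ℝ⁴ of the system ẋ = v_x, v̇_x = A(x − cos ωt)/[(x − cos ωt)² + (y − sin ωt)²]^α − k v_x, ẏ = v_y, v̇_y = A(y − sin ωt)/[(x − cos ωt)² + (y − sin ωt)²]^α − k v_y, with ‖X(0)‖ ≤ r, is defined for all t ≥ 0 and satisfies ‖(x(t), y(t))‖ < 1 for all t ≥ 0; that is, a leader traversing the unit circle at sufficiently high angular frequency ω confines the follower near the origin for infinite time. -/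

import Mathlib

open Real Set

/-!
Identify the plane with `ℂ`, let `e = exp (iωt)` be the leader and let `z`, `v` be the position
and velocity of the follower. To first order in `z`, the repulsion `(z - e) / |z - e|^(2α)` is
`-e - (α - 1) z - α e² z̄`, with an error `O(|z|²)` uniform in `e`. The terms in `e` and `e²`
oscillate rapidly, and subtracting their primitive in time, which is `O(1 / ω)`, from `v` leaves
the damped oscillator `z' = u`, `u' = -k u - A (α - 1) z` up to errors `O(|z|² + 1 / ω)`.
Because `α > 1` its stiffness is positive, so a strict Lyapunov function traps small solutions.
Since only motions in a small ball matter, global existence follows by cutting off the field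
outside that ball, where it becomes bounded and Lipschitz.
-/

open Filter Metric Topology Asymptotics
open scoped ComplexConjugate NNReal RealInnerProductSpace

section GlobalExistence

variable {E : Type*} [NormedAddCommGroup E] [NormedSpace ℝ E]

theorem eqOn_Ioo_of_hasDerivAt {f : ℝ → E → E} {K : ℝ≥0} (hf : ∀ t, LipschitzWith K (f t))
    {γ₁ γ₂ : ℝ → E} {a b : ℝ} (hab : a ≤ b)
    (h₁ : ∀ t ∈ Ioo (-a) a, HasDerivAt γ₁ (f t (γ₁ t)) t)
    (h₂ : ∀ t ∈ Ioo (-b) b, HasDerivAt γ₂ (f t (γ₂ t)) t) (h₀ : γ₁ 0 = γ₂ 0) :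
    EqOn γ₁ γ₂ (Ioo (-a) a) := by
  intro t ht
  have h0 : (0 : ℝ) ∈ Ioo (-a) a := ⟨by linarith [ht.1, ht.2], by linarith [ht.1, ht.2]⟩
  exact ODE_solution_unique_of_mem_Ioo (v := f) (s := fun _ => univ)
    (fun t _ => (hf t).lipschitzOnWith) h0 (fun s hs => ⟨h₁ s hs, mem_univ _⟩)
    (fun s hs => ⟨h₂ s (Ioo_subset_Ioo (neg_le_neg hab) hab hs), mem_univ _⟩) h₀ ht

theorem exists_forall_hasDerivAt_of_forall_Ioo {f : ℝ → E → E} {K : ℝ≥0}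
    (hf : ∀ t, LipschitzWith K (f t)) {x₀ : E}
    (hloc : ∀ a : ℝ, ∃ γ : ℝ → E, γ 0 = x₀ ∧ ∀ t ∈ Ioo (-a) a, HasDerivAt γ (f t (γ t)) t) :
    ∃ γ : ℝ → E, γ 0 = x₀ ∧ ∀ t, HasDerivAt γ (f t (γ t)) t := by
  choose g hg₀ hg using hloc
  have hagree {a b : ℝ} (hab : a ≤ b) : EqOn (g a) (g b) (Ioo (-a) a) :=
    eqOn_Ioo_of_hasDerivAt hf hab (hg a) (hg b) (by rw [hg₀, hg₀])
  have mem_window (s : ℝ) : s ∈ Ioo (-(|s| + 1)) (|s| + 1) := abs_lt.1 (lt_add_one |s|)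
  refine ⟨fun t => g (|t| + 1) t, hg₀ _, fun t => ?_⟩
  refine (hg (|t| + 1) t (mem_window t)).congr_of_eventuallyEq ?_
  filter_upwards [Ioo_mem_nhds (mem_window t).1 (mem_window t).2] with s hs
  rcases le_total (|s| + 1) (|t| + 1) with h | h
  · exact hagree h (mem_window s)
  · exact (hagree h hs).symm

theorem exists_forall_hasDerivAt_of_lipschitzWith_of_bounded [CompleteSpace E] {f : ℝ → E → E}
    {K L : ℝ≥0} (hf : ∀ t, LipschitzWith K (f t)) (hcont : ∀ x, Continuous fun t => f t x)
    (hL : ∀ t x, ‖f t x‖ ≤ L) (x₀ : E) :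
    ∃ γ : ℝ → E, γ 0 = x₀ ∧ ∀ t, HasDerivAt γ (f t (γ t)) t := by
  refine exists_forall_hasDerivAt_of_forall_Ioo hf fun a => ?_
  have hpl : IsPicardLindelof f (tmin := -|a|) (tmax := |a|) ⟨0, by simp⟩ x₀ (L * ‖a‖₊) 0 L K :=
    { lipschitzOnWith := fun t _ => (hf t).lipschitzOnWith
      continuousOn := fun x _ => (hcont x).continuousOn
      norm_le := fun t _ x _ => hL t x
      mul_max_le := by simp }
  obtain ⟨γ, hγ₀, hγ⟩ := hpl.exists_eq_forall_mem_Icc_hasDerivWithinAt₀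
  refine ⟨γ, hγ₀, fun t ht => ?_⟩
  have ht' : t ∈ Ioo (-|a|) |a| := Ioo_subset_Ioo (neg_le_neg (le_abs_self a)) (le_abs_self a) ht
  exact (hγ t (Ioo_subset_Icc_self ht')).hasDerivAt (Icc_mem_nhds ht'.1 ht'.2)

/-- The radial retraction of a normed space onto its closed ball of radius `R > 0`. It is used to
cut off a vector field outside that ball. -/
noncomputable def radialRetraction (R : ℝ) (x : E) : E := (R / max R ‖x‖) • x

theorem radialRetraction_of_mem {R : ℝ} (hR : 0 < R) {x : E} (hx : x ∈ closedBall 0 R) :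
    radialRetraction R x = x := by
  rw [radialRetraction, max_eq_left (mem_closedBall_zero_iff.1 hx), div_self hR.ne', one_smul]

theorem radialRetraction_mem {R : ℝ} (hR : 0 < R) (x : E) :
    radialRetraction R x ∈ closedBall 0 R := by
  have hmax : 0 < max R ‖x‖ := lt_max_of_lt_left hR
  rw [mem_closedBall_zero_iff, radialRetraction, norm_smul, Real.norm_of_nonneg (by positivity),
    div_mul_eq_mul_div, div_le_iff₀ hmax]
  gcongr
  exact le_max_right _ _

theorem lipschitzWith_radialRetraction {R : ℝ} (hR : 0 < R) :
    LipschitzWith 2 (radialRetraction R : E → E) := by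
  refine LipschitzWith.of_dist_le_mul fun x y => ?_
  have hx : 0 < max R ‖x‖ := lt_max_of_lt_left hR
  have hsplit : radialRetraction R x - radialRetraction R y = (R / max R ‖x‖) • (x - y) +
      ((max R ‖y‖ - max R ‖x‖) / max R ‖x‖) • radialRetraction R y := by
    simp only [radialRetraction, smul_smul, smul_sub, sub_add, ← sub_smul]
    congr 2
    field_simp
    ring
  have hscale : ‖(R / max R ‖x‖) • (x - y)‖ ≤ ‖x - y‖ := by
    rw [norm_smul, Real.norm_of_nonneg (by positivity)]
    exact mul_le_of_le_one_left (norm_nonneg _) ((div_le_one hx).2 (le_max_left _ _))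
  have hmax : |max R ‖y‖ - max R ‖x‖| ≤ ‖x - y‖ := by
    calc |max R ‖y‖ - max R ‖x‖| ≤ |‖y‖ - ‖x‖| := by
          simpa [max_comm R] using abs_max_sub_max_le_abs ‖y‖ ‖x‖ R
      _ ≤ ‖x - y‖ := by rw [norm_sub_rev]; exact abs_norm_sub_norm_le y x
  have hrest : ‖((max R ‖y‖ - max R ‖x‖) / max R ‖x‖) • radialRetraction R y‖ ≤ ‖x - y‖ := by
    rw [norm_smul, Real.norm_eq_abs, abs_div, abs_of_pos hx, div_mul_eq_mul_div, div_le_iff₀ hx]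
    have := mem_closedBall_zero_iff.1 (radialRetraction_mem hR y)
    gcongr
    exact this.trans (le_max_left _ _)
  rw [dist_eq_norm, dist_eq_norm, hsplit]
  calc _ ≤ ‖x - y‖ + ‖x - y‖ := norm_add_le_of_le hscale hrest
    _ = (2 : ℝ≥0) * ‖x - y‖ := by push_cast; ring

theorem exists_differentiable_forall_mem_closedBall_hasDerivAt [CompleteSpace E]
    {f : ℝ → E → E} {K L : ℝ≥0} {R : ℝ} (hR : 0 < R)
    (hf : ∀ t, LipschitzOnWith K (f t) (closedBall 0 R))
    (hcont : ∀ x ∈ closedBall 0 R, Continuous fun t => f t x) (hL : ∀ t, ‖f t 0‖ ≤ L) (x₀ : E) :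
    ∃ γ : ℝ → E, γ 0 = x₀ ∧ Differentiable ℝ γ ∧
      ∀ t, γ t ∈ closedBall 0 R → HasDerivAt γ (f t (γ t)) t := by
  have hlip (t : ℝ) : LipschitzWith (K * 2) fun x => f t (radialRetraction R x) :=
    lipschitzOnWith_univ.1 <| (hf t).comp (lipschitzWith_radialRetraction hR).lipschitzOnWith
      fun x _ => radialRetraction_mem hR x
  have hbound (t : ℝ) (x : E) : ‖f t (radialRetraction R x)‖ ≤ (L + K * R.toNNReal : ℝ≥0) := by
    have hmem := radialRetraction_mem hR x
    have hdist := (hf t).norm_sub_le hmem (mem_closedBall_self hR.le)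
    rw [sub_zero] at hdist
    push_cast [Real.coe_toNNReal R hR.le]
    calc _ ≤ ‖f t 0‖ + ‖f t (radialRetraction R x) - f t 0‖ := norm_le_norm_add_norm_sub' _ _
      _ ≤ L + K * R := by
        gcongr
        · exact hL t
        · exact hdist.trans (by gcongr; exact mem_closedBall_zero_iff.1 hmem)
  obtain ⟨γ, hγ₀, hγ⟩ := exists_forall_hasDerivAt_of_lipschitzWith_of_bounded hlip
    (fun x => hcont _ (radialRetraction_mem hR x)) hbound x₀
  refine ⟨γ, hγ₀, fun t => (hγ t).differentiableAt, fun t ht => ?_⟩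
  simpa only [radialRetraction_of_mem hR ht] using hγ t

end GlobalExistence

theorem eventually_mul_lt_nhdsGT (a : ℝ) {b : ℝ} (hb : 0 < b) :
    ∀ᶠ x in 𝓝[>] (0 : ℝ), a * x < b := by
  refine (tendsto_nhdsWithin_of_tendsto_nhds ?_).eventually_lt_const hb
  simpa using (continuous_const_mul a).tendsto 0

theorem eventually_div_lt_atTop (a : ℝ) {b : ℝ} (hb : 0 < b) : ∀ᶠ x in atTop, a / x < b :=
  (tendsto_const_nhds.div_atTop tendsto_id).eventually_lt_const hb

section DampedOscillator

theorem le_of_deriv_neg_of_eq {V : ℝ → ℝ} {a c : ℝ} (hV : ∀ t ≥ a, DifferentiableAt ℝ V t)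
    (ha : V a ≤ c) (hneg : ∀ t ≥ a, V t = c → deriv V t < 0) : ∀ t ≥ a, V t ≤ c := fun _ ht =>
  image_le_of_deriv_right_lt_deriv_boundary (f' := deriv V) (B := fun _ => c) (B' := fun _ => 0)
    (fun s hs => (hV s hs.1).continuousAt.continuousWithinAt)
    (fun s hs => (hV s hs.1).hasDerivAt.hasDerivWithinAt) ha (fun s => hasDerivAt_const s c)
    (fun s hs => hneg s hs.1) ⟨ht, le_rfl⟩

variable {E : Type*} [NormedAddCommGroup E] [InnerProductSpace ℝ E] {k β : ℝ}

/-- A Lyapunov function for the damped oscillator `z' = u`, `u' = -k u - β z`. The cross term in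
`u + k z` makes its derivative `-2 k (‖u‖² + β ‖z‖²)`, which is negative in both variables. -/
noncomputable def dampedEnergy (k β : ℝ) (z u : E) : ℝ :=
  ‖u‖ ^ 2 + ‖u + k • z‖ ^ 2 + 2 * β * ‖z‖ ^ 2

theorem hasDerivAt_dampedEnergy {z u : ℝ → E} {p q : E} {t : ℝ}
    (hz : HasDerivAt z (u t + p) t) (hu : HasDerivAt u (-(k • u t) - β • z t + q) t) :
    HasDerivAt (fun s => dampedEnergy k β (z s) (u s))
      (-(2 * k * (‖u t‖ ^ 2 + β * ‖z t‖ ^ 2)) +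
        (2 * ⟪u t, q⟫ + 2 * ⟪u t + k • z t, q + k • p⟫ + 4 * β * ⟪z t, p⟫)) t := by
  refine ((hu.norm_sq.add (hu.add (hz.const_smul k)).norm_sq).add
    (hz.norm_sq.const_mul (2 * β))).congr_deriv ?_
  simp only [Pi.add_apply, Pi.smul_apply, ← real_inner_self_eq_norm_sq, inner_add_left,
    inner_add_right, inner_sub_right, inner_neg_right, real_inner_smul_left,
    real_inner_smul_right, real_inner_comm (z t) (u t)]
  ring

theorem norm_add_smul_le_one_add_mul (hk : 0 ≤ k) {a b : E} {d : ℝ} (ha : ‖a‖ ≤ d)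
    (hb : ‖b‖ ≤ d) : ‖a + k • b‖ ≤ (1 + k) * d := by
  calc ‖a + k • b‖ ≤ ‖a‖ + k * ‖b‖ := by
        simpa [norm_smul, abs_of_nonneg hk] using norm_add_le a (k • b)
    _ ≤ d + k * d := by gcongr
    _ = (1 + k) * d := by ring

theorem dampedEnergy_le (hk : 0 ≤ k) (hβ : 0 ≤ β) {z u : E} {d : ℝ} (hz : ‖z‖ ≤ d)
    (hu : ‖u‖ ≤ d) :
    dampedEnergy k β z u ≤ (1 + (1 + k) ^ 2 + 2 * β) * d ^ 2 := by
  calc dampedEnergy k β z u ≤ d ^ 2 + ((1 + k) * d) ^ 2 + 2 * β * d ^ 2 := by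
        unfold dampedEnergy
        gcongr
        exact norm_add_smul_le_one_add_mul hk hu hz
    _ = (1 + (1 + k) ^ 2 + 2 * β) * d ^ 2 := by ring

theorem norm_le_of_dampedEnergy_le (hβ : 0 < β) {z u : E} {R : ℝ} (hR : 0 ≤ R)
    (h : dampedEnergy k β z u ≤ min 1 (2 * β) * R ^ 2) : ‖z‖ ≤ R ∧ ‖u‖ ≤ R := by
  unfold dampedEnergy at h
  have h₁ : min 1 (2 * β) * R ^ 2 ≤ 1 * R ^ 2 := by gcongr; exact min_le_left _ _
  have h₂ : min 1 (2 * β) * R ^ 2 ≤ 2 * β * R ^ 2 := by gcongr; exact min_le_right _ _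
  have hz : 2 * β * ‖z‖ ^ 2 ≤ 2 * β * R ^ 2 := by
    linarith [sq_nonneg ‖u‖, sq_nonneg ‖u + k • z‖]
  have hu : ‖u‖ ^ 2 ≤ R ^ 2 := by
    have : 0 ≤ 2 * β * ‖z‖ ^ 2 := by positivity
    linarith [sq_nonneg ‖u + k • z‖]
  exact ⟨(sq_le_sq₀ (norm_nonneg z) hR).1 (le_of_mul_le_mul_left hz (by positivity)),
    (sq_le_sq₀ (norm_nonneg u) hR).1 hu⟩

theorem dampedEnergy_le_dissipation (hβ : 0 < β) (z u : E) :
    dampedEnergy k β z u ≤ (3 + 2 * k ^ 2 / β) * (‖u‖ ^ 2 + β * ‖z‖ ^ 2) := by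
  have hsum : ‖u + k • z‖ ^ 2 ≤ 2 * (‖u‖ ^ 2 + k ^ 2 * ‖z‖ ^ 2) := by
    have := parallelogram_law_with_norm ℝ u (k • z)
    have hk : ‖k • z‖ * ‖k • z‖ = k ^ 2 * ‖z‖ ^ 2 := by
      rw [norm_smul, Real.norm_eq_abs, ← sq_abs k]; ring
    nlinarith [sq_nonneg ‖u - k • z‖]
  have hexpand : (3 + 2 * k ^ 2 / β) * (‖u‖ ^ 2 + β * ‖z‖ ^ 2) =
      3 * ‖u‖ ^ 2 + 2 * k ^ 2 / β * ‖u‖ ^ 2 + 3 * β * ‖z‖ ^ 2 + 2 * k ^ 2 * ‖z‖ ^ 2 := by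
    field_simp
    ring
  have h₁ : 0 ≤ 2 * k ^ 2 / β * ‖u‖ ^ 2 := by positivity
  have h₂ : 0 ≤ β * ‖z‖ ^ 2 := by positivity
  unfold dampedEnergy
  linarith

theorem dampedEnergy_perturbation_le (hk : 0 ≤ k) (hβ : 0 ≤ β) {z u p q : E} {R η : ℝ}
    (hz : ‖z‖ ≤ R) (hu : ‖u‖ ≤ R) (hp : ‖p‖ ≤ η) (hq : ‖q‖ ≤ η) :
    2 * ⟪u, q⟫ + 2 * ⟪u + k • z, q + k • p⟫ + 4 * β * ⟪z, p⟫ ≤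
      (2 + 2 * (1 + k) ^ 2 + 4 * β) * (R * η) := by
  have : 0 ≤ R := (norm_nonneg z).trans hz
  have hinner {a b : E} {c d : ℝ} (ha : ‖a‖ ≤ c) (hb : ‖b‖ ≤ d) : ⟪a, b⟫ ≤ c * d :=
    (real_inner_le_norm a b).trans
      (mul_le_mul ha hb (norm_nonneg b) ((norm_nonneg a).trans ha))
  calc _ ≤ 2 * (R * η) + 2 * ((1 + k) * R * ((1 + k) * η)) + 4 * β * (R * η) := by
        gcongr
        · exact hinner hu hq
        · exact hinner (norm_add_smul_le_one_add_mul hk hu hz)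
            (norm_add_smul_le_one_add_mul hk hq hp)
        · exact hinner hz hp
    _ = (2 + 2 * (1 + k) ^ 2 + 4 * β) * (R * η) := by ring

theorem exists_forall_norm_le_of_damped_oscillator (E : Type*) [NormedAddCommGroup E]
    [InnerProductSpace ℝ E] (hk : 0 < k) (hβ : 0 < β) :
    ∃ c > 0, ∀ R > 0, ∀ z u : ℝ → E,
      (∀ t ≥ 0, DifferentiableAt ℝ z t) → (∀ t ≥ 0, DifferentiableAt ℝ u t) →
      ‖z 0‖ ≤ c * R → ‖u 0‖ ≤ c * R →
      (∀ t ≥ 0, ‖z t‖ ≤ R → ‖u t‖ ≤ R →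
        ‖deriv z t - u t‖ ≤ c * R ∧ ‖deriv u t + k • u t + β • z t‖ ≤ c * R) →
      ∀ t ≥ 0, ‖z t‖ ≤ R ∧ ‖u t‖ ≤ R := by
  set μ : ℝ := min 1 (2 * β)
  have hμ : 0 < μ := by positivity
  set B : ℝ := 1 + (1 + k) ^ 2 + 2 * β
  set D : ℝ := 3 + 2 * k ^ 2 / β
  obtain ⟨c, ⟨⟨hcμ, hcD⟩, hc1⟩, hc : 0 < c⟩ :=
    (((eventually_mul_lt_nhdsGT B hμ).and
      (eventually_mul_lt_nhdsGT (2 * B) (b := 2 * k * μ / D) (by positivity))).and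
      (eventually_mul_lt_nhdsGT 1 one_pos)).and self_mem_nhdsWithin |>.exists
  refine ⟨c, hc, fun R hR z u hz hu hz₀ hu₀ hpert => ?_⟩
  suffices henergy : ∀ t ≥ 0, dampedEnergy k β (z t) (u t) ≤ μ * R ^ 2 from
    fun t ht => norm_le_of_dampedEnergy_le hβ hR.le (henergy t ht)
  have hderiv (t : ℝ) (ht : t ≥ 0) := hasDerivAt_dampedEnergy (k := k) (β := β) (z := z) (u := u)
    (p := deriv z t - u t) (q := deriv u t + k • u t + β • z t)
    ((hz t ht).hasDerivAt.congr_deriv (by module))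
    ((hu t ht).hasDerivAt.congr_deriv (by module))
  -- On the level set `μ R²` the dissipation is of order `R²` and the perturbation of order `c R²`.
  refine le_of_deriv_neg_of_eq (fun t ht => (hderiv t ht).differentiableAt) ?_ fun t ht hlevel => ?_
  · calc dampedEnergy k β (z 0) (u 0) ≤ B * (c * R) ^ 2 := dampedEnergy_le hk.le hβ.le hz₀ hu₀
      _ = B * c * c * R ^ 2 := by ring
      _ ≤ μ * 1 * R ^ 2 := by gcongr; linarith
      _ = μ * R ^ 2 := by ring
  · obtain ⟨hzt, hut⟩ := norm_le_of_dampedEnergy_le hβ hR.le hlevel.le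
    obtain ⟨hp, hq⟩ := hpert t ht hzt hut
    rw [(hderiv t ht).deriv]
    have hdrift : μ / D * R ^ 2 ≤ ‖u t‖ ^ 2 + β * ‖z t‖ ^ 2 := by
      rw [div_mul_eq_mul_div, div_le_iff₀' (by positivity), ← hlevel]
      exact dampedEnergy_le_dissipation hβ (z t) (u t)
    calc _ ≤ -(2 * k * (μ / D * R ^ 2)) + 2 * B * (R * (c * R)) := by
          gcongr
          exact (dampedEnergy_perturbation_le hk.le hβ.le hzt hut hp hq).trans_eq (by ring)
      _ = (2 * B * c - 2 * k * μ / D) * R ^ 2 := by ring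
      _ < 0 := mul_neg_of_neg_of_pos (sub_neg.2 hcD) (by positivity)

end DampedOscillator

section Taylor

variable {E F : Type*} [NormedAddCommGroup E] [NormedSpace ℝ E] [NormedAddCommGroup F]
  [NormedSpace ℝ F]

theorem isBigO_sub_sub_fderiv_of_contDiffAt {f : E → F} {a : E} (hf : ContDiffAt ℝ 2 f a) :
    (fun x => f x - f a - fderiv ℝ f a (x - a)) =O[𝓝 a] fun x => ‖x - a‖ ^ 2 := by
  have hf' : ContDiffAt ℝ 1 (fderiv ℝ f) a := hf.fderiv_right le_rfl
  obtain ⟨C, hC, hbound⟩ := (hf'.differentiableAt one_ne_zero).isBigO_sub.exists_pos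
  have hdiff : ∀ᶠ x in 𝓝 a, DifferentiableAt ℝ f x :=
    (hf.eventually (by simp)).mono fun x hx => hx.differentiableAt two_ne_zero
  obtain ⟨ε, hε, hball⟩ := Metric.eventually_nhds_iff_ball.1 (hbound.bound.and hdiff)
  refine IsBigO.of_bound C ?_
  filter_upwards [ball_mem_nhds a hε] with x hx
  have hsub : closedBall a ‖x - a‖ ⊆ ball a ε := closedBall_subset_ball (mem_ball_iff_norm.1 hx)
  have hderiv : ∀ y ∈ closedBall a ‖x - a‖, ‖fderiv ℝ f y - fderiv ℝ f a‖ ≤ C * ‖x - a‖ :=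
    fun y hy => (hball y (hsub hy)).1.trans (by gcongr; exact mem_closedBall_iff_norm.1 hy)
  calc ‖f x - f a - fderiv ℝ f a (x - a)‖ ≤ C * ‖x - a‖ * ‖x - a‖ :=
        (convex_closedBall a ‖x - a‖).norm_image_sub_le_of_norm_fderiv_le'
          (fun y hy => (hball y (hsub hy)).2) hderiv (mem_closedBall_self (norm_nonneg _))
          (mem_closedBall_iff_norm.2 le_rfl)
    _ = C * ‖‖x - a‖ ^ 2‖ := by rw [norm_pow, norm_norm]; ring

end Taylor

section Repulsion

section InnerProductSpace

variable {E : Type*} [NormedAddCommGroup E] [InnerProductSpace ℝ E] {α : ℝ}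

/-- The repulsive force `w / (‖w‖²)^α` exerted by a source at the origin on a particle at `w`. At
`w = 0` it takes the value `0`. -/
noncomputable def repulsion (α : ℝ) (w : E) : E := (‖w‖ ^ 2) ^ (-α) • w

theorem repulsion_of_norm_eq_one {w : E} (hw : ‖w‖ = 1) : repulsion α w = w := by
  simp [repulsion, hw]

theorem contDiffAt_repulsion {n : WithTop ℕ∞} {w : E} (hw : w ≠ 0) :
    ContDiffAt ℝ n (repulsion α) w :=
  ((contDiff_norm_sq ℝ).contDiffAt.rpow_const_of_ne (by simpa using hw)).smul contDiffAt_id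

theorem fderiv_repulsion_of_norm_eq_one {w : E} (hw : ‖w‖ = 1) (h : E) :
    fderiv ℝ (repulsion α) w h = h - (2 * α * ⟪w, h⟫) • w := by
  have hnorm : HasFDerivAt (fun x : E => ‖x‖ ^ 2) (2 • innerSL ℝ w) w :=
    (hasStrictFDerivAt_norm_sq w).hasFDerivAt
  have hsmul : HasFDerivAt (repulsion α) _ w :=
    (hnorm.rpow_const (p := -α) (Or.inl (by simp [hw]))).smul (hasFDerivAt_id w)
  rw [hsmul.fderiv]
  simp only [hw, one_pow, one_rpow, one_smul, mul_one, add_apply, ContinuousLinearMap.id_apply,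
    ContinuousLinearMap.smulRight_apply, smul_apply, coe_innerSL_apply, nsmul_eq_mul,
    Nat.cast_ofNat, smul_eq_mul, neg_mul, neg_smul]
  module

end InnerProductSpace

variable {α : ℝ} {e : ℂ}

theorem repulsion_mul (he : ‖e‖ = 1) (w : ℂ) : repulsion α (e * w) = e * repulsion α w := by
  simp only [repulsion, norm_mul, he, one_mul, mul_smul_comm]

theorem repulsion_sub_eq_mul (he : ‖e‖ = 1) (z : ℂ) :
    repulsion α (z - e) = e * repulsion α (conj e * z - 1) := by
  have hee : e * conj e = 1 := by simp [Complex.mul_conj', he]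
  rw [← repulsion_mul he, mul_sub, ← mul_assoc, hee, one_mul, mul_one]

theorem exists_lipschitzOnWith_repulsion_sub (α : ℝ) :
    ∃ ρ > 0, ∃ K : ℝ≥0, ∀ e : ℂ, ‖e‖ = 1 →
      LipschitzOnWith K (fun z => repulsion α (z - e)) (closedBall 0 ρ) := by
  obtain ⟨K, s, hs, hK⟩ :=
    (contDiffAt_repulsion (α := α) (w := (-1 : ℂ)) (by simp)).exists_lipschitzOnWith
  obtain ⟨ρ, hρ, hball⟩ := nhds_basis_closedBall.mem_iff.1 hs
  refine ⟨ρ, hρ, K, fun e he => LipschitzOnWith.of_dist_le_mul fun z hz z' hz' => ?_⟩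
  have hmem {y : ℂ} (hy : y ∈ closedBall 0 ρ) : conj e * y - 1 ∈ s :=
    hball (by simpa [he] using hy)
  have := hK.dist_le_mul _ (hmem hz) _ (hmem hz')
  simpa [repulsion_sub_eq_mul he, dist_eq_norm, ← mul_sub, he] using this

theorem isBigO_repulsion_sub_one_add (α : ℝ) :
    (fun z : ℂ => repulsion α (z - 1) + 1 + ((α - 1 : ℝ) * z + α * conj z)) =O[𝓝 0]
      fun z => ‖z‖ ^ 2 := by
  have htaylor := isBigO_sub_sub_fderiv_of_contDiffAt
    (contDiffAt_repulsion (α := α) (w := (-1 : ℂ)) (by simp))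
  have hshift : Tendsto (fun z : ℂ => z - 1) (𝓝 0) (𝓝 (-1)) := by
    simpa using (continuous_sub_right (1 : ℂ)).tendsto 0
  refine (htaylor.comp_tendsto hshift).congr' (.of_forall fun z => ?_) (.of_forall fun z => ?_)
  · have hre : (2 * z.re : ℂ) = z + conj z := by simpa using (Complex.add_conj z).symm
    simp only [norm_neg, norm_one, repulsion_of_norm_eq_one, fderiv_repulsion_of_norm_eq_one,
      sub_neg_eq_add, inner_neg_left, Complex.inner, map_one, mul_one, smul_neg, Complex.real_smul,
      Complex.ofReal_mul, Complex.ofReal_ofNat, Complex.ofReal_neg, Function.comp_apply,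
      sub_add_cancel, Complex.ofReal_sub, Complex.ofReal_one]
    linear_combination α * hre
  · simp

theorem exists_norm_repulsion_sub_add_le (α : ℝ) :
    ∃ ρ > 0, ∃ C ≥ 0, ∀ e z : ℂ, ‖e‖ = 1 → ‖z‖ ≤ ρ →
      ‖repulsion α (z - e) + e + ((α - 1 : ℝ) * z + α * e ^ 2 * conj z)‖ ≤ C * ‖z‖ ^ 2 := by
  obtain ⟨C, hC, hbound⟩ := (isBigO_repulsion_sub_one_add α).exists_nonneg
  obtain ⟨ρ, hρ, hball⟩ := nhds_basis_closedBall.eventually_iff.1 hbound.bound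
  refine ⟨ρ, hρ, C, hC, fun e z he hz => ?_⟩
  have hee : e * conj e = 1 := by simp [Complex.mul_conj', he]
  have hrot : repulsion α (z - e) + e + ((α - 1 : ℝ) * z + α * e ^ 2 * conj z) =
      e * (repulsion α (conj e * z - 1) + 1 +
        ((α - 1 : ℝ) * (conj e * z) + α * conj (conj e * z))) := by
    rw [repulsion_sub_eq_mul he, map_mul, Complex.conj_conj]
    linear_combination -(α - 1 : ℝ) * z * hee
  have hz' := hball (x := conj e * z) (by simpa [he] using hz)
  rw [hrot, norm_mul, he, one_mul]
  simpa [he] using hz'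

end Repulsion

section Follower

/-- The position, in complex notation, of a leader traversing the unit circle at angular frequency
`ω`. -/
noncomputable def leader (ω t : ℝ) : ℂ := Complex.exp ((ω * t : ℝ) * Complex.I)

theorem norm_leader (ω t : ℝ) : ‖leader ω t‖ = 1 :=
  Complex.norm_exp_ofReal_mul_I (ω * t)

@[simp]
theorem leader_re (ω t : ℝ) : (leader ω t).re = cos (ω * t) :=
  Complex.exp_ofReal_mul_I_re (ω * t)

@[simp]
theorem leader_im (ω t : ℝ) : (leader ω t).im = sin (ω * t) :=
  Complex.exp_ofReal_mul_I_im (ω * t)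

theorem hasDerivAt_leader (ω t : ℝ) :
    HasDerivAt (leader ω) (ω * Complex.I * leader ω t) t := by
  have hexp := (((hasDerivAt_id t).const_mul ω).ofReal_comp.mul_const Complex.I).cexp
  exact hexp.congr_deriv (by simp only [id_eq, Complex.ofReal_mul, mul_one, leader]; ring)

theorem continuous_leader (ω : ℝ) : Continuous (leader ω) :=
  continuous_iff_continuousAt.2 fun t => (hasDerivAt_leader ω t).continuousAt

/-- The velocity field of the follower in the phase space of pairs `(position, velocity)`, with the
plane identified with `ℂ`. -/
noncomputable def followerField (A k α ω t : ℝ) (X : ℂ × ℂ) : ℂ × ℂ :=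
  (X.2, A • repulsion α (X.1 - leader ω t) - k • X.2)

variable {A k α ω : ℝ}

theorem exists_lipschitzOnWith_followerField (A k α : ℝ) :
    ∃ ρ > 0, ∃ K : ℝ≥0, ∀ ω t, LipschitzOnWith K (followerField A k α ω t) (closedBall 0 ρ) := by
  obtain ⟨ρ, hρ, K, hK⟩ := exists_lipschitzOnWith_repulsion_sub α
  refine ⟨ρ, hρ, max 1 (‖A‖₊ * (K * 1) + ‖k‖₊ * 1), fun ω t => ?_⟩
  have hfst : MapsTo Prod.fst (closedBall (0 : ℂ × ℂ) ρ) (closedBall 0 ρ) := fun X hX =>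
    mem_closedBall_zero_iff.2 ((norm_fst_le X).trans (mem_closedBall_zero_iff.1 hX))
  have hforce := (lipschitzWith_smul A).comp_lipschitzOnWith
    ((hK (leader ω t) (norm_leader ω t)).comp LipschitzWith.prod_fst.lipschitzOnWith hfst)
  have hfriction := (lipschitzWith_smul k).comp (LipschitzWith.prod_snd (α := ℂ) (β := ℂ))
  exact LipschitzWith.prod_snd.lipschitzOnWith.prodMk (hforce.sub hfriction.lipschitzOnWith)

theorem continuous_followerField (A k α ω : ℝ) {X : ℂ × ℂ} (hX : ‖X.1‖ < 1) :
    Continuous fun t => followerField A k α ω t X := by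
  have hne (t : ℝ) : X.1 - leader ω t ≠ 0 := fun h => by
    rw [sub_eq_zero.1 h, norm_leader] at hX
    exact hX.false
  have hforce : Continuous fun t => repulsion α (X.1 - leader ω t) :=
    continuous_iff_continuousAt.2 fun t =>
      (contDiffAt_repulsion (n := 0) (hne t)).continuousAt.comp
        (f := fun t => X.1 - leader ω t)
        (continuous_const.sub (continuous_leader ω)).continuousAt
  exact continuous_const.prodMk ((hforce.const_smul A).sub continuous_const)

theorem norm_followerField_zero (A k α ω t : ℝ) : ‖followerField A k α ω t 0‖ = |A| := by
  simp [followerField, repulsion, norm_leader]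

theorem exists_differentiable_forall_mem_closedBall_hasDerivAt_followerField (A k α : ℝ) :
    ∃ ρ ∈ Ioo (0 : ℝ) 1, ∀ ω X₀, ∃ X : ℝ → ℂ × ℂ, X 0 = X₀ ∧ Differentiable ℝ X ∧
      ∀ t, X t ∈ closedBall 0 ρ → HasDerivAt X (followerField A k α ω t (X t)) t := by
  obtain ⟨ρ, hρ, K, hK⟩ := exists_lipschitzOnWith_followerField A k α
  refine ⟨min ρ (1 / 2), ⟨by positivity, ?_⟩, fun ω X₀ => ?_⟩
  · exact (min_le_right _ _).trans_lt one_half_lt_one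
  · refine exists_differentiable_forall_mem_closedBall_hasDerivAt (K := K) (L := ‖A‖₊)
      (by positivity)
      (fun t => (hK ω t).mono (closedBall_subset_closedBall (min_le_left _ _)))
      (fun X hX => continuous_followerField A k α ω ?_)
      (fun t => (norm_followerField_zero A k α ω t).le) X₀
    calc ‖X.1‖ ≤ ‖X‖ := norm_fst_le X
      _ ≤ 1 / 2 := (mem_closedBall_zero_iff.1 hX).trans (min_le_right _ _)
      _ < 1 := one_half_lt_one

/-- The fast `O(1 / ω)` oscillation of the velocity of a follower at `z`: the primitive in time, for
fixed `z`, of the oscillating part `-A (e + α e² z̄)` of the first-order force, where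
`e = leader ω t`. -/
noncomputable def micromotion (A α ω t : ℝ) (z : ℂ) : ℂ :=
  (A / ω) • (Complex.I * (leader ω t + α / 2 * leader ω t ^ 2 * conj z))

theorem norm_micromotion_le (hA : 0 ≤ A) (hα : 0 ≤ α) (hω : 0 ≤ ω) (t : ℝ) {z : ℂ} (hz : ‖z‖ ≤ 1) :
    ‖micromotion A α ω t z‖ ≤ A * (1 + α) / ω := by
  have hsum : ‖leader ω t + α / 2 * leader ω t ^ 2 * conj z‖ ≤ 1 + α := by
    refine norm_add_le_of_le (norm_leader ω t).le ?_
    simp only [norm_mul, norm_pow, norm_leader, norm_div, Complex.norm_real, RCLike.norm_conj,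
      Real.norm_of_nonneg hα, Complex.norm_ofNat, one_pow, mul_one]
    nlinarith [norm_nonneg z]
  calc ‖micromotion A α ω t z‖ = A / ω * ‖leader ω t + α / 2 * leader ω t ^ 2 * conj z‖ := by
        rw [micromotion, norm_smul, norm_mul, Complex.norm_I, one_mul,
          Real.norm_of_nonneg (by positivity)]
    _ ≤ A / ω * (1 + α) := by gcongr
    _ = A * (1 + α) / ω := by ring

theorem hasDerivAt_micromotion (hω : ω ≠ 0) {z : ℝ → ℂ} {v : ℂ} {t : ℝ} (hz : HasDerivAt z v t) :
    HasDerivAt (fun s => micromotion A α ω s (z s))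
      (-(A • (leader ω t + α * leader ω t ^ 2 * conj (z t))) +
        (α * A / (2 * ω)) • (Complex.I * leader ω t ^ 2 * conj v)) t := by
  have hω' : (ω : ℂ) ≠ 0 := by exact_mod_cast hω
  have he := hasDerivAt_leader ω t
  refine (((he.add (((he.pow 2).const_mul (α / 2 : ℂ)).mul hz.star)).const_mul
    Complex.I).const_smul (A / ω)).congr_deriv ?_
  simp only [Nat.cast_ofNat, Nat.add_one_sub_one, pow_one, RCLike.star_def, Pi.pow_apply,
    Complex.real_smul, Complex.ofReal_div, Complex.ofReal_mul, Complex.ofReal_ofNat]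
  field_simp
  linear_combination (2 * ω * A * (leader ω t + α * leader ω t ^ 2 * conj (z t))) * Complex.I_sq

theorem hasDerivAt_sub_micromotion (hω : ω ≠ 0) {X : ℝ → ℂ × ℂ} {t : ℝ}
    (hX : HasDerivAt X (followerField A k α ω t (X t)) t) :
    HasDerivAt (fun s => (X s).2 - micromotion A α ω s (X s).1)
      (-(k • (X t).2) - (A * (α - 1)) • (X t).1 +
        (A • (repulsion α ((X t).1 - leader ω t) + leader ω t +
          ((α - 1 : ℝ) * (X t).1 + α * leader ω t ^ 2 * conj (X t).1)) -
        (α * A / (2 * ω)) • (Complex.I * leader ω t ^ 2 * conj (X t).2))) t := by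
  have hpos : HasDerivAt (fun s => (X s).1) (X t).2 t := hX.fst
  have hvel : HasDerivAt (fun s => (X s).2) (followerField A k α ω t (X t)).2 t := hX.snd
  refine (hvel.sub (hasDerivAt_micromotion hω hpos)).congr_deriv ?_
  simp only [followerField, Complex.real_smul, Complex.ofReal_div, Complex.ofReal_mul,
    Complex.ofReal_ofNat, Complex.ofReal_sub, Complex.ofReal_one]
  ring

theorem norm_deriv_sub_micromotion_add_le (hA : 0 ≤ A) (hk : 0 ≤ k) (hα : 0 ≤ α) (hω : 0 < ω)
    {X : ℝ → ℂ × ℂ} {t C : ℝ} (hX : HasDerivAt X (followerField A k α ω t (X t)) t)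
    (hz : ‖(X t).1‖ ≤ 1) (hv : ‖(X t).2‖ ≤ 1)
    (hC : ‖repulsion α ((X t).1 - leader ω t) + leader ω t +
      ((α - 1 : ℝ) * (X t).1 + α * leader ω t ^ 2 * conj (X t).1)‖ ≤ C * ‖(X t).1‖ ^ 2) :
    ‖deriv (fun s => (X s).2 - micromotion A α ω s (X s).1) t +
      k • ((X t).2 - micromotion A α ω t (X t).1) + (A * (α - 1)) • (X t).1‖ ≤
      A * C * ‖(X t).1‖ ^ 2 + (k + 1) * (A * (1 + α) / ω) := by
  rw [(hasDerivAt_sub_micromotion hω.ne' hX).deriv]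
  set force := repulsion α ((X t).1 - leader ω t) + leader ω t +
    ((α - 1 : ℝ) * (X t).1 + α * leader ω t ^ 2 * conj (X t).1)
  set lag := (α * A / (2 * ω)) • (Complex.I * leader ω t ^ 2 * conj (X t).2)
  have hforce : ‖A • force‖ ≤ A * C * ‖(X t).1‖ ^ 2 := by
    rw [norm_smul, Real.norm_of_nonneg hA, mul_assoc]
    gcongr
  have hdrag : ‖k • micromotion A α ω t (X t).1‖ ≤ k * (A * (1 + α) / ω) := by
    rw [norm_smul, Real.norm_of_nonneg hk]
    gcongr
    exact norm_micromotion_le hA hα hω.le t hz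
  have hlag : ‖lag‖ ≤ A * (1 + α) / ω := by
    calc ‖lag‖ = α * A / (2 * ω) * ‖(X t).2‖ := by
          simp [lag, norm_leader, abs_of_nonneg, abs_of_pos, hA, hα, hω]
      _ ≤ α * A / (2 * ω) * 1 := by gcongr
      _ = α * A / 2 / ω := by ring
      _ ≤ A * (1 + α) / ω := by gcongr; nlinarith
  calc _ = ‖A • force - k • micromotion A α ω t (X t).1 - lag‖ := by congr 1; module
    _ ≤ A * C * ‖(X t).1‖ ^ 2 + k * (A * (1 + α) / ω) + A * (1 + α) / ω :=
      norm_sub_le_of_le (norm_sub_le_of_le hforce hdrag) hlag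
    _ = A * C * ‖(X t).1‖ ^ 2 + (k + 1) * (A * (1 + α) / ω) := by ring

theorem eventually_norm_micromotion_le (hA : 0 ≤ A) (hα : 0 ≤ α) {η : ℝ} (hη : 0 < η) :
    ∀ᶠ ω in atTop, ∀ t z, ‖z‖ ≤ 1 → ‖micromotion A α ω t z‖ ≤ η := by
  filter_upwards [eventually_ge_atTop 0, eventually_div_lt_atTop (A * (1 + α)) hη]
    with ω hω hsmall t z hz
  exact (norm_micromotion_le hA hα hω t hz).trans hsmall.le

theorem eventually_norm_averaging_error_le (hA : 0 ≤ A) (hk : 0 ≤ k) (hα : 0 ≤ α) {c : ℝ}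
    (hc : 0 < c) :
    ∀ᶠ R in 𝓝[>] 0, ∀ᶠ ω in atTop, ∀ (X : ℝ → ℂ × ℂ) (t : ℝ),
      HasDerivAt X (followerField A k α ω t (X t)) t →
      ‖(X t).1‖ ≤ R → ‖(X t).2 - micromotion A α ω t (X t).1‖ ≤ R →
      ‖deriv (fun s => (X s).1) t - ((X t).2 - micromotion A α ω t (X t).1)‖ ≤ c * R ∧
      ‖deriv (fun s => (X s).2 - micromotion A α ω s (X s).1) t +
        k • ((X t).2 - micromotion A α ω t (X t).1) + (A * (α - 1)) • (X t).1‖ ≤ c * R := by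
  obtain ⟨ρ, hρ, C, hC₀, hC⟩ := exists_norm_repulsion_sub_add_le α
  filter_upwards [self_mem_nhdsWithin, eventually_mul_lt_nhdsGT 2 one_pos,
    eventually_mul_lt_nhdsGT 1 hρ, eventually_mul_lt_nhdsGT (A * C) (half_pos hc)]
    with R (hR : 0 < R) hR₁ hRρ hRC
  filter_upwards [eventually_gt_atTop 0,
    eventually_norm_micromotion_le hA hα (η := min (c * R) R) (by positivity),
    eventually_div_lt_atTop ((k + 1) * (A * (1 + α))) (b := c * R / 2) (by positivity)]
    with ω hω hmicro hPω X t hX hz hu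
  have hz₁ : ‖(X t).1‖ ≤ 1 := by linarith
  have hs := hmicro t _ hz₁
  have hv : ‖(X t).2‖ ≤ 1 := by
    linarith [norm_le_norm_add_norm_sub' (X t).2 (micromotion A α ω t (X t).1),
      min_le_right (c * R) R]
  constructor
  · rw [HasDerivAt.deriv (f := fun s => (X s).1) (f' := (X t).2) hX.fst, sub_sub_cancel]
    exact hs.trans (min_le_left _ _)
  · have hquad : A * C * ‖(X t).1‖ ^ 2 ≤ c / 2 * R := by
      calc _ ≤ A * C * R ^ 2 := by gcongr
        _ = A * C * R * R := by ring
        _ ≤ c / 2 * R := by gcongr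
    calc _ ≤ A * C * ‖(X t).1‖ ^ 2 + (k + 1) * (A * (1 + α) / ω) :=
          norm_deriv_sub_micromotion_add_le hA hk hα hω hX hz₁ hv
            (hC _ _ (norm_leader ω t) (by linarith))
      _ ≤ c / 2 * R + c * R / 2 := by
          rw [← mul_div_assoc]
          exact add_le_add hquad hPω.le
      _ = c * R := by ring

theorem exists_eventually_forall_mem_closedBall_of_hasDerivAt_followerField (hA : 0 < A)
    (hk : 0 < k) (hα : 1 < α) {ρ : ℝ} (hρ : 0 < ρ) :
    ∃ r > 0, ∀ᶠ ω in atTop, ∀ X : ℝ → ℂ × ℂ, (∀ t ≥ 0, DifferentiableAt ℝ X t) →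
      (∀ t ≥ 0, X t ∈ closedBall 0 ρ → HasDerivAt X (followerField A k α ω t (X t)) t) →
      ‖X 0‖ ≤ r → ∀ t ≥ 0, X t ∈ closedBall 0 ρ := by
  have hα₀ : 0 ≤ α := by linarith
  obtain ⟨c, hc, hstable⟩ :=
    exists_forall_norm_le_of_damped_oscillator ℂ hk (mul_pos hA (sub_pos.2 hα))
  obtain ⟨R, ⟨herror, hRρ, hR₁⟩, hR : 0 < R⟩ :=
    ((eventually_norm_averaging_error_le hA.le hk.le hα₀ hc).and
      ((eventually_mul_lt_nhdsGT 2 hρ).and (eventually_mul_lt_nhdsGT 1 one_pos))).and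
      self_mem_nhdsWithin |>.exists
  set η := min (c * R / 2) R
  have hηc : η ≤ c * R / 2 := min_le_left _ _
  have hηR : η ≤ R := min_le_right _ _
  have hη : 0 < η := by positivity
  refine ⟨η, hη, ?_⟩
  filter_upwards [eventually_ne_atTop 0, herror, eventually_norm_micromotion_le hA.le hα₀ hη]
    with ω hω herror hmicro X hX hfield h₀
  have hz₀ : ‖(X 0).1‖ ≤ η := (norm_fst_le _).trans h₀
  have hz (t : ℝ) (ht : t ≥ 0) : DifferentiableAt ℝ (fun s => (X s).1) t := (hX t ht).fst
  have hu (t : ℝ) (ht : t ≥ 0) :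
      DifferentiableAt ℝ (fun s => (X s).2 - micromotion A α ω s (X s).1) t :=
    (hX t ht).snd.sub (hasDerivAt_micromotion hω (hz t ht).hasDerivAt).differentiableAt
  have hu₀ : ‖(X 0).2 - micromotion A α ω 0 (X 0).1‖ ≤ η + η :=
    norm_sub_le_of_le ((norm_snd_le _).trans h₀) (hmicro 0 _ (by linarith))
  have hmem {t : ℝ} (hzt : ‖(X t).1‖ ≤ R) (hut : ‖(X t).2 - micromotion A α ω t (X t).1‖ ≤ R) :
      X t ∈ closedBall 0 ρ := by
    rw [mem_closedBall_zero_iff, norm_prod_le_iff]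
    refine ⟨by linarith, ?_⟩
    linarith [norm_le_norm_add_norm_sub' (X t).2 (micromotion A α ω t (X t).1),
      hmicro t (X t).1 (by linarith)]
  have hbound := hstable R hR _ _ hz hu (by linarith) (by linarith)
    fun t ht hzt hut => herror X t (hfield t ht (hmem hzt hut)) hzt hut
  exact fun t ht => hmem (hbound t ht).1 (hbound t ht).2

theorem hasDerivAt_iff_re_im {z : ℝ → ℂ} {z' : ℂ} {t : ℝ} :
    HasDerivAt z z' t ↔
      HasDerivAt (fun s => (z s).re) z'.re t ∧ HasDerivAt (fun s => (z s).im) z'.im t := by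
  refine ⟨fun h => ⟨Complex.reCLM.hasFDerivAt.comp_hasDerivAt t h,
    Complex.imCLM.hasFDerivAt.comp_hasDerivAt t h⟩, fun ⟨hre, him⟩ => ?_⟩
  refine (hre.ofReal_comp.add (him.ofReal_comp.mul_const Complex.I)).congr_deriv
    (Complex.re_add_im z') |>.congr_of_eventuallyEq (.of_forall fun s => ?_)
  exact (Complex.re_add_im (z s)).symm

theorem hasDerivAt_followerField_iff {X : ℝ → ℂ × ℂ} {t : ℝ} :
    HasDerivAt X (followerField A k α ω t (X t)) t ↔
      HasDerivAt (fun s => (X s).1.re) (X t).2.re t ∧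
      HasDerivAt (fun s => (X s).2.re)
        (A * ((X t).1.re - cos (ω * t)) /
          (((X t).1.re - cos (ω * t)) ^ 2 + ((X t).1.im - sin (ω * t)) ^ 2) ^ α -
            k * (X t).2.re) t ∧
      HasDerivAt (fun s => (X s).1.im) (X t).2.im t ∧
      HasDerivAt (fun s => (X s).2.im)
        (A * ((X t).1.im - sin (ω * t)) /
          (((X t).1.re - cos (ω * t)) ^ 2 + ((X t).1.im - sin (ω * t)) ^ 2) ^ α -
            k * (X t).2.im) t := by
  have hnorm : ‖(X t).1 - leader ω t‖ ^ 2 =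
      ((X t).1.re - cos (ω * t)) ^ 2 + ((X t).1.im - sin (ω * t)) ^ 2 := by
    rw [Complex.sq_norm, Complex.normSq_apply, ← sq, ← sq, Complex.sub_re, Complex.sub_im,
      leader_re, leader_im]
  have hprod : HasDerivAt X (followerField A k α ω t (X t)) t ↔
      HasDerivAt (fun s => (X s).1) (followerField A k α ω t (X t)).1 t ∧
      HasDerivAt (fun s => (X s).2) (followerField A k α ω t (X t)).2 t :=
    ⟨fun h => ⟨h.fst, h.snd⟩, fun h => h.1.prodMk h.2⟩
  have hforce (a : ℝ) : A * a / (‖(X t).1 - leader ω t‖ ^ 2) ^ α =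
      A * ((‖(X t).1 - leader ω t‖ ^ 2) ^ (-α) * a) := by
    rw [rpow_neg (by positivity)]
    ring
  rw [hprod, hasDerivAt_iff_re_im, hasDerivAt_iff_re_im, ← hnorm, hforce, hforce]
  simp only [followerField, repulsion, Complex.real_smul, Complex.sub_re, Complex.sub_im,
    Complex.mul_re, Complex.mul_im, Complex.ofReal_re, Complex.ofReal_im, leader_re, leader_im,
    zero_mul, sub_zero, add_zero]
  tauto

theorem norm_le_sqrt_sum_sq (X : ℂ × ℂ) :
    ‖X‖ ≤ √(X.1.re ^ 2 + X.2.re ^ 2 + X.1.im ^ 2 + X.2.im ^ 2) := by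
  rw [norm_prod_le_iff, Complex.norm_eq_sqrt_sq_add_sq, Complex.norm_eq_sqrt_sq_add_sq]
  constructor <;> refine sqrt_le_sqrt ?_ <;>
    linarith [sq_nonneg X.1.re, sq_nonneg X.1.im, sq_nonneg X.2.re, sq_nonneg X.2.im]

end Follower

/-- For `A > 0`, `k > 0`, `α > 1`, there exist `r > 0` and `ω₀ > 0` such that
for every `ω > ω₀`, every solution of the reduced leader–follower system (leader on the
unit circle at angular frequency `ω`) with `‖X(0)‖ ≤ r` is defined for all `t ≥ 0` and its
position satisfies `‖(x(t), y(t))‖ < 1` for all `t ≥ 0`. -/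
theorem high_frequency_circular_leader_confines_follower
    (A k α : ℝ) (hA : 0 < A) (hk : 0 < k) (hα : 1 < α) :
    ∃ r > (0 : ℝ), ∃ ω₀ > (0 : ℝ), ∀ ω : ℝ, ω₀ < ω →
      -- solutions exist (are defined) for all t ≥ 0
      ((∀ x0 vx0 y0 vy0 : ℝ,
          Real.sqrt (x0 ^ 2 + vx0 ^ 2 + y0 ^ 2 + vy0 ^ 2) ≤ r →
          ∃ x vx y vy : ℝ → ℝ,
            x 0 = x0 ∧ vx 0 = vx0 ∧ y 0 = y0 ∧ vy 0 = vy0 ∧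
            ∀ t ≥ (0 : ℝ),
              HasDerivAt x (vx t) t ∧
              HasDerivAt vx
                (A * (x t - Real.cos (ω * t)) /
                  ((x t - Real.cos (ω * t)) ^ 2 + (y t - Real.sin (ω * t)) ^ 2) ^ α -
                    k * vx t) t ∧
              HasDerivAt y (vy t) t ∧
              HasDerivAt vy
                (A * (y t - Real.sin (ω * t)) /
                  ((x t - Real.cos (ω * t)) ^ 2 + (y t - Real.sin (ω * t)) ^ 2) ^ α -
                    k * vy t) t) ∧
      -- every global solution starting with ‖X(0)‖ ≤ r stays within the unit disc
      (∀ x vx y vy : ℝ → ℝ,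
          (∀ t ≥ (0 : ℝ),
            HasDerivAt x (vx t) t ∧
            HasDerivAt vx
              (A * (x t - Real.cos (ω * t)) /
                ((x t - Real.cos (ω * t)) ^ 2 + (y t - Real.sin (ω * t)) ^ 2) ^ α -
                  k * vx t) t ∧
            HasDerivAt y (vy t) t ∧
            HasDerivAt vy
              (A * (y t - Real.sin (ω * t)) /
                ((x t - Real.cos (ω * t)) ^ 2 + (y t - Real.sin (ω * t)) ^ 2) ^ α -
                  k * vy t) t) →
          Real.sqrt ((x 0) ^ 2 + (vx 0) ^ 2 + (y 0) ^ 2 + (vy 0) ^ 2) ≤ r →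
          ∀ t ≥ (0 : ℝ), Real.sqrt ((x t) ^ 2 + (y t) ^ 2) < 1)) := by
  obtain ⟨ρ, ⟨hρ, hρ₁⟩, hexists⟩ :=
    exists_differentiable_forall_mem_closedBall_hasDerivAt_followerField A k α
  obtain ⟨r, hr, hconfined⟩ :=
    exists_eventually_forall_mem_closedBall_of_hasDerivAt_followerField hA hk hα hρ
  obtain ⟨ω₀, hω₀⟩ := eventually_atTop.1 hconfined
  refine ⟨r, hr, max ω₀ 1, by positivity, fun ω hω => ?_⟩
  have hconfined := hω₀ ω ((le_max_left _ _).trans hω.le)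
  refine ⟨fun x0 vx0 y0 vy0 h₀ => ?_, fun x vx y vy h h₀ t ht => ?_⟩
  · obtain ⟨X, hX₀, hdiff, hX⟩ := hexists ω (⟨x0, y0⟩, ⟨vx0, vy0⟩)
    have hmem := hconfined X (fun t _ => hdiff t) (fun t _ => hX t)
      (by simpa only [hX₀] using (norm_le_sqrt_sum_sq _).trans h₀)
    exact ⟨fun t => (X t).1.re, fun t => (X t).2.re, fun t => (X t).1.im, fun t => (X t).2.im,
      congrArg (·.1.re) hX₀, congrArg (·.2.re) hX₀, congrArg (·.1.im) hX₀, congrArg (·.2.im) hX₀,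
      fun t ht => hasDerivAt_followerField_iff.1 (hX t (hmem t ht))⟩
  · let X (t : ℝ) : ℂ × ℂ := (⟨x t, y t⟩, ⟨vx t, vy t⟩)
    have hX (t : ℝ) (ht : t ≥ 0) : HasDerivAt X (followerField A k α ω t (X t)) t :=
      hasDerivAt_followerField_iff.2 (h t ht)
    have hmem := hconfined X (fun t ht => (hX t ht).differentiableAt) (fun t ht _ => hX t ht)
      ((norm_le_sqrt_sum_sq (X 0)).trans h₀) t ht
    calc √(x t ^ 2 + y t ^ 2) = ‖(X t).1‖ := (Complex.norm_eq_sqrt_sq_add_sq (X t).1).symm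
      _ ≤ ‖X t‖ := norm_fst_le (X t)
      _ ≤ ρ := mem_closedBall_zero_iff.1 hmem
      _ < 1 := hρ₁
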